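/- For every k ≥ 1, the infimum λ_k* = inf_{a ≥ 1} λ_k(a) of the k-th Dirichlet biharmonic eigenvalue over rectangles of unit area is attained: there exists a_k* ≥ 1 with λ_k(a_k*) = λ_k*. In particular λ_k(a) → ∞ as a → ∞ for each fixed k. -/

import Mathlib

open MeasureTheory Real Filter

noncomputable section

/-- Directional (partial) derivative of `u : ℝ × ℝ → ℝ` in direction `v`. -/
def pd (v : ℝ × ℝ) (u : ℝ × ℝ → ℝ) : ℝ × ℝ → ℝ := fun p => fderiv ℝ u p v

/-- Second partial derivative `∂²u/∂x²`. -/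
def uxx (u : ℝ × ℝ → ℝ) : ℝ × ℝ → ℝ := pd (1, 0) (pd (1, 0) u)

/-- Second partial derivative `∂²u/∂y²`. -/
def uyy (u : ℝ × ℝ → ℝ) : ℝ × ℝ → ℝ := pd (0, 1) (pd (0, 1) u)

/-- Mixed second partial derivative `∂²u/∂x∂y`. -/
def uxy (u : ℝ × ℝ → ℝ) : ℝ × ℝ → ℝ := pd (0, 1) (pd (1, 0) u)

/-- The Laplacian `Δu = u_xx + u_yy`. -/
def lap (u : ℝ × ℝ → ℝ) : ℝ × ℝ → ℝ := fun p => uxx u p + uyy u p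

/-- The open rectangle `R_a = (0,a) × (0,1/a)` of unit area. -/
def Rect (a : ℝ) : Set (ℝ × ℝ) := Set.Ioo 0 a ×ˢ Set.Ioo 0 (1 / a)

/-- Admissible test functions: smooth, compactly supported inside `Ω`. -/
def Adm (Ω : Set (ℝ × ℝ)) (u : ℝ × ℝ → ℝ) : Prop :=
  ContDiff ℝ (⊤ : ℕ∞) u ∧ HasCompactSupport u ∧ tsupport u ⊆ Ω

/-- First Dirichlet eigenvalue of the biharmonic operator on `R_a`,
characterized variationally as the infimum of the Rayleigh quotient. -/
def lam1 (a : ℝ) : ℝ :=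
  sInf { μ | ∃ u : ℝ × ℝ → ℝ, Adm (Rect a) u ∧ u ≠ 0 ∧
    μ = (∫ p, (lap u p) ^ 2) / (∫ p, (u p) ^ 2) }

/-- `k`-th Dirichlet eigenvalue of the biharmonic operator on `R_a`:
infimum over linearly independent `k`-tuples of admissible functions of the
maximum of the Rayleigh quotient over nonzero linear combinations. -/
def lamk (k : ℕ) (a : ℝ) : ℝ :=
  sInf { μ | ∃ u : Fin k → (ℝ × ℝ → ℝ), (∀ i, Adm (Rect a) (u i)) ∧
    LinearIndependent ℝ u ∧
    μ = sSup { r | ∃ c : Fin k → ℝ, c ≠ 0 ∧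
      r = (∫ p, (lap (fun q => ∑ i, c i * u i q) p) ^ 2) /
          (∫ p, (∑ i, c i * u i p) ^ 2) } }

/-!
Write `⟪·, ·⟫` for the `L²` inner product. Multiplication by a linear form `ℓ` with `ℓ v = 1`
satisfies `[∂_v, ℓ] = 1`, so integration by parts gives `‖u‖² = -2 ⟪u, ℓ ∂_v u⟫`, and
`‖u‖² ≤ 4 h² ‖∂_v u‖²` by Cauchy–Schwarz when `|ℓ| ≤ h` on `Ω`. Together with
`‖∇u‖² = -⟪u, Δu⟫` this yields `‖u‖² ≤ 16 h⁴ ‖Δu‖²`. On `R_a` the coordinate `y` is at most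
`h = 1 / a`, hence `λ_k(a) ≥ a⁴ / 16 → ∞`.

Another two integrations by parts give `‖Δu‖² = ∑ i j, ‖∂ᵢ∂ⱼu‖²`. This sum of squares grows at most
by the factor `max (a / b) (b / a) ^ 4` when `u` is pulled back by the area-preserving diagonal map
`R_b → R_a`, so the min-max principle gives `λ_k(b) ≤ max (a / b) (b / a) ^ 4 * λ_k(a)`. Exchanging
the roles of `a` and `b` shows that `λ_k` is continuous, and a continuous function on `[1, ∞)` that
tends to `∞` attains its minimum.
-/

section MinMax

variable {ι V W : Type*} [Fintype ι] [AddCommGroup V] [Module ℝ V] [AddCommGroup W] [Module ℝ W]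

theorem apply_self_le_sq_mul_of_le_mul_abs {B : LinearMap.BilinForm ℝ V}
    (hB : LinearMap.IsSymm B) (hnonneg : ∀ x, 0 ≤ B x x) {C : ℝ} {x y : V}
    (h : B x x ≤ C * |B x y|) :
    B x x ≤ C ^ 2 * B y y := by
  rcases (hnonneg x).eq_or_lt with hx | hx
  · rw [← hx]
    exact mul_nonneg (sq_nonneg C) (hnonneg y)
  refine le_of_mul_le_mul_left ?_ hx
  calc B x x * B x x ≤ (C * |B x y|) * (C * |B x y|) :=
        mul_self_le_mul_self hx.le h
    _ = C ^ 2 * B x y ^ 2 := by rw [← sq_abs (B x y)]; ring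
    _ ≤ C ^ 2 * (B x x * B y y) :=
        mul_le_mul_of_nonneg_left (B.apply_sq_le_of_symm hnonneg hB x y) (sq_nonneg C)
    _ = B x x * (C ^ 2 * B y y) := by ring

theorem continuous_quadraticForm {E : Type*} [NormedAddCommGroup E] [NormedSpace ℝ E]
    [FiniteDimensional ℝ E] (Q : QuadraticForm ℝ E) : Continuous Q := by
  let B : E →L[ℝ] E →L[ℝ] ℝ := LinearMap.toContinuousBilinearMap (QuadraticMap.associated Q)
  have hQ : ⇑Q = fun x => B x x :=
    funext fun x => (QuadraticMap.associated_eq_self_apply ℝ Q x).symm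
  rw [hQ]
  fun_prop

theorem exists_forall_le_mul_of_posDef {E : Type*} [NormedAddCommGroup E] [NormedSpace ℝ E]
    [FiniteDimensional ℝ E] (Q : QuadraticForm ℝ E) {N : QuadraticForm ℝ E} (hN : N.PosDef) :
    ∃ K, ∀ x, Q x ≤ K * N x := by
  have hquot : ContinuousOn (fun x => Q x / N x) (Metric.sphere 0 1) :=
    (continuous_quadraticForm Q).continuousOn.div (continuous_quadraticForm N).continuousOn
      fun x hx => (hN x (ne_zero_of_mem_unit_sphere ⟨x, hx⟩)).ne'
  obtain ⟨K, hK⟩ := (isCompact_sphere (0 : E) 1).bddAbove_image hquot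
  refine ⟨K, fun x => ?_⟩
  rcases eq_or_ne x 0 with rfl | hx
  · simp
  have hunit : ‖x‖⁻¹ • x ∈ Metric.sphere (0 : E) 1 := by
    simp [norm_smul, norm_ne_zero_iff.2 hx]
  have hratio : Q (‖x‖⁻¹ • x) / N (‖x‖⁻¹ • x) = Q x / N x := by
    rw [QuadraticMap.map_smul, QuadraticMap.map_smul, smul_eq_mul, smul_eq_mul,
      mul_div_mul_left _ _ (by simpa using hx)]
  rw [← div_le_iff₀ (hN x hx), ← hratio]
  exact hK ⟨_, hunit, rfl⟩

/-- The maximum of the Rayleigh quotient `Q / N` over the nonzero linear combinations of the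
family `u`; a supremum over coefficient vectors, and an honest maximum when `N` is positive
definite and `u` is linearly independent. -/
def maxRayleigh (Q N : QuadraticForm ℝ V) (u : ι → V) : ℝ :=
  sSup {r | ∃ c : ι → ℝ, c ≠ 0 ∧ r = Q (∑ i, c i • u i) / N (∑ i, c i • u i)}

variable (ι) in
/-- The min-max eigenvalue of `Q` relative to `N`: the infimum of `maxRayleigh` over linearly
independent families indexed by `ι`. It is the `k`-th eigenvalue when `ι` has `k` elements. -/
def minMaxRayleigh (Q N : QuadraticForm ℝ V) : ℝ :=
  sInf {μ | ∃ u : ι → V, LinearIndependent ℝ u ∧ μ = maxRayleigh Q N u}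

variable {Q N : QuadraticForm ℝ V} {u : ι → V}

theorem maxRayleigh_nonneg (hQ : ∀ v, 0 ≤ Q v) (hN : ∀ v, 0 ≤ N v) (u : ι → V) :
    0 ≤ maxRayleigh Q N u := by
  refine Real.sSup_nonneg ?_
  rintro _ ⟨c, -, rfl⟩
  exact div_nonneg (hQ _) (hN _)

theorem rayleigh_le_maxRayleigh (hN : N.PosDef) (hu : LinearIndependent ℝ u) {c : ι → ℝ}
    (hc : c ≠ 0) : Q (∑ i, c i • u i) / N (∑ i, c i • u i) ≤ maxRayleigh Q N u := by
  let T : (ι → ℝ) →ₗ[ℝ] V := Fintype.linearCombination ℝ u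
  have hT : Function.Injective T := linearIndependent_iff_injective_fintypeLinearCombination.1 hu
  have hNT : (N.comp T).PosDef := fun x hx => hN _ ((map_ne_zero_iff T hT).2 hx)
  obtain ⟨K, hK⟩ := exists_forall_le_mul_of_posDef (Q.comp T) hNT
  refine le_csSup ⟨K, ?_⟩ ⟨c, hc, rfl⟩
  rintro _ ⟨d, hd, rfl⟩
  exact (div_le_iff₀ (hNT d hd)).2 (hK d)

theorem maxRayleigh_le [Nonempty ι] {μ : ℝ}
    (h : ∀ c : ι → ℝ, c ≠ 0 → Q (∑ i, c i • u i) / N (∑ i, c i • u i) ≤ μ) :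
    maxRayleigh Q N u ≤ μ := by
  obtain ⟨c, hc⟩ := exists_ne (0 : ι → ℝ)
  refine csSup_le ⟨_, c, hc, rfl⟩ ?_
  rintro _ ⟨d, hd, rfl⟩
  exact h d hd

theorem minMaxRayleigh_le_maxRayleigh (hQ : ∀ v, 0 ≤ Q v) (hN : ∀ v, 0 ≤ N v)
    (hu : LinearIndependent ℝ u) : minMaxRayleigh ι Q N ≤ maxRayleigh Q N u := by
  refine csInf_le ⟨0, ?_⟩ ⟨u, hu, rfl⟩
  rintro _ ⟨w, -, rfl⟩
  exact maxRayleigh_nonneg hQ hN w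

theorem le_minMaxRayleigh [Nonempty ι] (hV : ∃ u : ι → V, LinearIndependent ℝ u)
    (hN : N.PosDef) {C : ℝ} (h : ∀ v, C * N v ≤ Q v) : C ≤ minMaxRayleigh ι Q N := by
  obtain ⟨u₀, hu₀⟩ := hV
  refine le_csInf ⟨_, u₀, hu₀, rfl⟩ ?_
  rintro _ ⟨u, hu, rfl⟩
  obtain ⟨c, hc⟩ := exists_ne (0 : ι → ℝ)
  have hne : ∑ i, c i • u i ≠ 0 := fun h0 =>
    hc (funext (Fintype.linearIndependent_iff.1 hu c h0))
  exact ((le_div_iff₀ (hN _ hne)).2 (h _)).trans (rayleigh_le_maxRayleigh hN hu hc)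

theorem minMaxRayleigh_le_mul [Nonempty ι] (hV : ∃ u : ι → V, LinearIndependent ℝ u)
    (hN : N.PosDef) {Q' N' : QuadraticForm ℝ W} (hQ' : ∀ w, 0 ≤ Q' w) (hN' : ∀ w, 0 ≤ N' w)
    (T : V →ₗ[ℝ] W) (hNT : ∀ v, N' (T v) = N v) {M : ℝ} (hM : 0 < M)
    (hQT : ∀ v, Q' (T v) ≤ M * Q v) : minMaxRayleigh ι Q' N' ≤ M * minMaxRayleigh ι Q N := by
  obtain ⟨u₀, hu₀⟩ := hV
  rw [← div_le_iff₀' hM]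
  refine le_csInf ⟨_, u₀, hu₀, rfl⟩ ?_
  rintro _ ⟨u, hu, rfl⟩
  rw [div_le_iff₀' hM]
  have hker : LinearMap.ker T = ⊥ := LinearMap.ker_eq_bot'.2 fun v hv => by
    by_contra hne
    simpa [← hNT v, hv] using hN v hne
  refine (minMaxRayleigh_le_maxRayleigh hQ' hN' (hu.map' T hker)).trans
    (maxRayleigh_le fun c hc => ?_)
  have hcomb : ∑ i, c i • (T ∘ u) i = T (∑ i, c i • u i) := by simp
  calc Q' (∑ i, c i • (T ∘ u) i) / N' (∑ i, c i • (T ∘ u) i)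
      = Q' (T (∑ i, c i • u i)) / N (∑ i, c i • u i) := by rw [hcomb, hNT]
    _ ≤ M * Q (∑ i, c i • u i) / N (∑ i, c i • u i) :=
        div_le_div_of_nonneg_right (hQT _) (hN.nonneg _)
    _ = M * (Q (∑ i, c i • u i) / N (∑ i, c i • u i)) := mul_div_assoc _ _ _
    _ ≤ M * maxRayleigh Q N u :=
        mul_le_mul_of_nonneg_left (rayleigh_le_maxRayleigh hN hu hc) hM.le

end MinMax

section TestFunction

open TopologicalSpace (Opens)
open scoped Distributions LineDeriv ContDiff

variable {E : Type*} [NormedAddCommGroup E] [NormedSpace ℝ E] {Ω Ω' : Opens E}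

theorem lineDerivOp_eq_fderiv (v : E) (u : 𝓓(Ω, ℝ)) (p : E) : (∂_{v} u) p = fderiv ℝ u p v := by
  rw [TestFunction.lineDerivOp_eq_lineDerivCLM ℝ, TestFunction.lineDerivCLM_apply_of_le (by simp)]
  exact (u.contDiff.differentiable (by simp) p).lineDeriv_eq_fderiv

theorem lineDerivOp_testFunction_comm (v w : E) (u : 𝓓(Ω, ℝ)) :
    ∂_{v} (∂_{w} u) = ∂_{w} (∂_{v} u) := by
  have hsecond (a b : E) (p : E) : (∂_{a} (∂_{b} u)) p = fderiv ℝ (fderiv ℝ u) p a b := by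
    have hu : DifferentiableAt ℝ (fderiv ℝ u) p :=
      (u.contDiff.fderiv_right (m := ∞) (by simp)).differentiable (by simp) p
    have hb : ⇑(∂_{b} u : 𝓓(Ω, ℝ)) = fun q => fderiv ℝ u q b := funext (lineDerivOp_eq_fderiv b u)
    rw [lineDerivOp_eq_fderiv, hb, fderiv_clm_apply hu (differentiableAt_const b)]
    simp
  ext p
  rw [hsecond, hsecond]
  have hsmooth : minSmoothness ℝ 2 ≤ (∞ : WithTop ℕ∞) :=
    minSmoothness_of_isRCLikeNormedField.trans_le (WithTop.coe_le_coe.2 le_top)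
  exact u.contDiff.contDiffAt.isSymmSndFDerivAt hsmooth v w

/-- The product of a smooth function and a test function, as a test function. It lets the
coordinate functions act as multiplication operators. -/
def smoothMul {g : E → ℝ} (hg : ContDiff ℝ ∞ g) (u : 𝓓(Ω, ℝ)) : 𝓓(Ω, ℝ) where
  toFun p := g p * u p
  contDiff' := hg.mul u.contDiff
  hasCompactSupport' := u.hasCompactSupport.mul_left
  tsupport_subset' := (tsupport_mul_subset_right).trans u.tsupport_subset

@[simp]
theorem smoothMul_apply {g : E → ℝ} (hg : ContDiff ℝ ∞ g) (u : 𝓓(Ω, ℝ)) (p : E) :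
    smoothMul hg u p = g p * u p :=
  rfl

theorem lineDerivOp_smoothMul_clm (v : E) (ℓ : E →L[ℝ] ℝ) (u : 𝓓(Ω, ℝ)) :
    ∂_{v} (smoothMul ℓ.contDiff u) = ℓ v • u + smoothMul ℓ.contDiff (∂_{v} u) := by
  ext p
  have hu : DifferentiableAt ℝ u p := u.contDiff.differentiable (by simp) p
  have hmul : ⇑(smoothMul ℓ.contDiff u) = fun q => ℓ q * u q := rfl
  rw [lineDerivOp_eq_fderiv, hmul, fderiv_fun_mul ℓ.differentiableAt hu]
  simp only [ContinuousLinearMap.fderiv, add_apply, smul_apply, smul_eq_mul, smoothMul_apply,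
    lineDerivOp_eq_fderiv]
  ring

/-- Precomposition of test functions with a linear automorphism of the ambient space. -/
def pullback (T : E ≃L[ℝ] E) (hT : T ⁻¹' Ω ⊆ Ω') : 𝓓(Ω, ℝ) →ₗ[ℝ] 𝓓(Ω', ℝ) where
  toFun u :=
    { toFun := u ∘ T
      contDiff' := u.contDiff.comp T.contDiff
      hasCompactSupport' := u.hasCompactSupport.comp_homeomorph T.toHomeomorph
      tsupport_subset' := (tsupport_comp_subset_preimage u T.continuous).trans
        ((Set.preimage_mono u.tsupport_subset).trans hT) }
  map_add' _ _ := rfl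
  map_smul' _ _ := rfl

@[simp]
theorem pullback_apply (T : E ≃L[ℝ] E) (hT : T ⁻¹' Ω ⊆ Ω') (u : 𝓓(Ω, ℝ)) (p : E) :
    pullback T hT u p = u (T p) :=
  rfl

theorem lineDerivOp_pullback (v : E) (T : E ≃L[ℝ] E) (hT : T ⁻¹' Ω ⊆ Ω') (u : 𝓓(Ω, ℝ)) :
    ∂_{v} (pullback T hT u) = pullback T hT (∂_{T v} u) := by
  ext p
  have hcomp : ⇑(pullback T hT u) = u ∘ T := rfl
  rw [lineDerivOp_eq_fderiv, hcomp, T.comp_right_fderiv, pullback_apply, lineDerivOp_eq_fderiv]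
  rfl

theorem linearIndependent_coe_testFunction_iff {ι : Type*} {u : ι → 𝓓(Ω, ℝ)} :
    LinearIndependent ℝ (fun i => ⇑(u i)) ↔ LinearIndependent ℝ u := by
  let coeLM : 𝓓(Ω, ℝ) →ₗ[ℝ] (E → ℝ) :=
    { toFun := fun w => w, map_add' := fun _ _ => rfl, map_smul' := fun _ _ => rfl }
  exact coeLM.linearIndependent_iff (LinearMap.ker_eq_bot.2 DFunLike.coe_injective)

variable {ι : Type*} [Fintype ι]

/-- The second-order operator `∑ i, ∂_{e i}²` on test functions, which is the Laplacian when `e`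
is an orthonormal basis. -/
def frameLaplacian (e : ι → E) : 𝓓(Ω, ℝ) →ₗ[ℝ] 𝓓(Ω, ℝ) :=
  ∑ i, (LineDeriv.lineDerivOpCLM ℝ 𝓓(Ω, ℝ) (e i)).toLinearMap ∘ₗ
    (LineDeriv.lineDerivOpCLM ℝ 𝓓(Ω, ℝ) (e i)).toLinearMap

theorem frameLaplacian_apply (e : ι → E) (u : 𝓓(Ω, ℝ)) :
    frameLaplacian e u = ∑ i, ∂_{e i} (∂_{e i} u) := by
  simp [frameLaplacian]

theorem exists_testFunction_eq_one_eqOn_zero [FiniteDimensional ℝ E] {x : E} (hx : x ∈ Ω)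
    {s : Set E} (hs : s.Finite) (hxs : x ∉ s) :
    ∃ u : 𝓓(Ω, ℝ), u x = 1 ∧ Set.EqOn u 0 s := by
  have hnhds : (Ω : Set E) ∩ sᶜ ∈ nhds x :=
    (Ω.isOpen.inter hs.isClosed.isOpen_compl).mem_nhds ⟨hx, hxs⟩
  obtain ⟨f, hfs, hf, hsmooth, -, hfx⟩ := exists_contDiff_tsupport_subset (n := ⊤) hnhds
  exact ⟨⟨f, hsmooth, hf, hfs.trans Set.inter_subset_left⟩, hfx, fun y hy =>
    image_eq_zero_of_notMem_tsupport fun hmem => (hfs hmem).2 hy⟩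

theorem exists_linearIndependent_testFunction [FiniteDimensional ℝ E] [Nontrivial E]
    (hΩ : (Ω : Set E).Nonempty) (ι : Type*) [Finite ι] :
    ∃ u : ι → 𝓓(Ω, ℝ), LinearIndependent ℝ u := by
  have := Fintype.ofFinite ι
  obtain ⟨x₀, hx₀⟩ := hΩ
  have := Module.punctured_nhds_neBot ℝ E x₀
  have := (infinite_of_mem_nhds x₀ (Ω.isOpen.mem_nhds hx₀)).to_subtype
  let x : ι ↪ Ω := (Fintype.equivFin ι).toEmbedding.trans
    (Fin.valEmbedding.trans (Infinite.natEmbedding Ω))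
  have hbump (i : ι) :
      ∃ u : 𝓓(Ω, ℝ), u (x i) = 1 ∧ Set.EqOn u 0 ((fun j => (x j : E)) '' {i}ᶜ) := by
    refine exists_testFunction_eq_one_eqOn_zero (x i).2 (Set.toFinite _) ?_
    rintro ⟨j, hj, hji⟩
    exact hj (x.injective (Subtype.ext hji))
  choose u hdiag hoff using hbump
  refine ⟨u, Fintype.linearIndependent_iff.2 fun c hc i => ?_⟩
  have hsum : ∑ j, c j * u j (x i) = c i := by
    rw [Finset.sum_eq_single i (fun j _ hj => ?_) (by simp), hdiag, mul_one]
    rw [hoff j ⟨i, hj.symm, rfl⟩, Pi.zero_apply, mul_zero]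
  rw [← hsum]
  simpa using congrArg (fun w : 𝓓(Ω, ℝ) => w (x i)) hc

variable [MeasurableSpace E] [BorelSpace E]

theorem integrable_testFunction_mul (μ : Measure E) [IsFiniteMeasureOnCompacts μ]
    (u w : 𝓓(Ω, ℝ)) : Integrable (fun p => u p * w p) μ :=
  (u.continuous.mul w.continuous).integrable_of_hasCompactSupport u.hasCompactSupport.mul_right

/-- The `L²(μ)` inner product on test functions, as a bilinear form. -/
def l2Form (Ω : Opens E) (μ : Measure E) [IsFiniteMeasureOnCompacts μ] :
    LinearMap.BilinForm ℝ 𝓓(Ω, ℝ) :=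
  LinearMap.mk₂ ℝ (fun u w => ∫ p, u p * w p ∂μ)
    (fun u₁ u₂ w => by
      simp only [add_apply, add_mul]
      exact integral_add (integrable_testFunction_mul μ u₁ w) (integrable_testFunction_mul μ u₂ w))
    (fun c u w => by simp only [smul_apply, smul_eq_mul, mul_assoc, integral_const_mul])
    (fun u w₁ w₂ => by
      simp only [add_apply, mul_add]
      exact integral_add (integrable_testFunction_mul μ u w₁) (integrable_testFunction_mul μ u w₂))
    (fun c u w => by
      simp only [smul_apply, smul_eq_mul, mul_left_comm _ c, integral_const_mul])

/-- The squared `L²(μ)` norm on test functions, the denominator of the Rayleigh quotient. -/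
def massForm (Ω : Opens E) (μ : Measure E) [IsFiniteMeasureOnCompacts μ] :
    QuadraticForm ℝ 𝓓(Ω, ℝ) :=
  (l2Form Ω μ).toQuadraticMap

/-- The squared `L²(μ)` norm of the Laplacian in the frame `e`, the quadratic form of the Dirichlet
biharmonic operator. -/
def bendingForm (Ω : Opens E) (μ : Measure E) [IsFiniteMeasureOnCompacts μ] (e : ι → E) :
    QuadraticForm ℝ 𝓓(Ω, ℝ) :=
  (massForm Ω μ).comp (frameLaplacian e)

section FiniteOnCompacts

variable (μ : Measure E) [IsFiniteMeasureOnCompacts μ]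

theorem l2Form_apply (u w : 𝓓(Ω, ℝ)) : l2Form Ω μ u w = ∫ p, u p * w p ∂μ :=
  rfl

theorem l2Form_comm (u w : 𝓓(Ω, ℝ)) : l2Form Ω μ u w = l2Form Ω μ w u := by
  simp only [l2Form_apply, mul_comm]

theorem l2Form_isSymm : LinearMap.IsSymm (l2Form Ω μ) :=
  ⟨l2Form_comm μ⟩

theorem l2Form_self_nonneg (u : 𝓓(Ω, ℝ)) : 0 ≤ l2Form Ω μ u u :=
  integral_nonneg fun p => mul_self_nonneg (u p)

theorem l2Form_self_pos [μ.IsOpenPosMeasure] {u : 𝓓(Ω, ℝ)} (hu : u ≠ 0) :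
    0 < l2Form Ω μ u u := by
  obtain ⟨p, hp⟩ := DFunLike.ne_iff.1 hu
  exact (u.continuous.mul u.continuous).integral_pos_of_hasCompactSupport_nonneg_nonzero
    u.hasCompactSupport.mul_right (fun q => mul_self_nonneg (u q)) (mul_self_ne_zero.2 hp)

theorem l2Form_smoothMul_left {g : E → ℝ} (hg : ContDiff ℝ ∞ g) (u w : 𝓓(Ω, ℝ)) :
    l2Form Ω μ (smoothMul hg u) w = l2Form Ω μ u (smoothMul hg w) := by
  simp only [l2Form_apply, smoothMul_apply]
  congr with p
  ring

theorem l2Form_smoothMul_self_le {g : E → ℝ} (hg : ContDiff ℝ ∞ g) {h : ℝ}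
    (hh : ∀ p ∈ Ω, |g p| ≤ h) (u : 𝓓(Ω, ℝ)) :
    l2Form Ω μ (smoothMul hg u) (smoothMul hg u) ≤ h ^ 2 * l2Form Ω μ u u := by
  simp only [l2Form_apply, ← integral_const_mul]
  refine integral_mono (integrable_testFunction_mul μ _ _)
    ((integrable_testFunction_mul μ u u).const_mul _) fun p => ?_
  by_cases hp : p ∈ Ω
  · calc g p * u p * (g p * u p) = g p ^ 2 * (u p * u p) := by ring
      _ ≤ h ^ 2 * (u p * u p) :=
        mul_le_mul_of_nonneg_right (sq_le_sq' (abs_le.1 (hh p hp)).1 (abs_le.1 (hh p hp)).2)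
          (mul_self_nonneg _)
  · have hup : u p = 0 := image_eq_zero_of_notMem_tsupport fun hmem => hp (u.tsupport_subset hmem)
    simp [hup]

theorem l2Form_pullback {T : E ≃L[ℝ] E} (hTμ : MeasurePreserving T μ μ)
    (hT : T ⁻¹' Ω ⊆ Ω') (u w : 𝓓(Ω, ℝ)) :
    l2Form Ω' μ (pullback T hT u) (pullback T hT w) = l2Form Ω μ u w :=
  hTμ.integral_comp T.toHomeomorph.measurableEmbedding fun p => u p * w p

theorem massForm_apply (u : 𝓓(Ω, ℝ)) : massForm Ω μ u = l2Form Ω μ u u :=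
  rfl

theorem bendingForm_apply (e : ι → E) (u : 𝓓(Ω, ℝ)) :
    bendingForm Ω μ e u = l2Form Ω μ (frameLaplacian e u) (frameLaplacian e u) :=
  rfl

theorem massForm_posDef [μ.IsOpenPosMeasure] : (massForm Ω μ).PosDef :=
  fun _ => l2Form_self_pos μ

theorem bendingForm_nonneg (e : ι → E) (u : 𝓓(Ω, ℝ)) : 0 ≤ bendingForm Ω μ e u :=
  l2Form_self_nonneg μ _

end FiniteOnCompacts

variable [FiniteDimensional ℝ E] (μ : Measure E) [μ.IsAddHaarMeasure]

theorem l2Form_lineDerivOp_right (v : E) (u w : 𝓓(Ω, ℝ)) :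
    l2Form Ω μ u (∂_{v} w) = -l2Form Ω μ (∂_{v} u) w := by
  have hu := integrable_testFunction_mul μ (∂_{v} u) w
  have hw := integrable_testFunction_mul μ u (∂_{v} w)
  simp only [l2Form_apply, lineDerivOp_eq_fderiv] at hu hw ⊢
  exact integral_mul_fderiv_eq_neg_fderiv_mul_of_integrable hu hw
    (integrable_testFunction_mul μ u w) (fun p _ => u.contDiff.differentiable (by simp) p)
    (fun p _ => w.contDiff.differentiable (by simp) p)

theorem l2Form_lineDerivOp_left (v : E) (u w : 𝓓(Ω, ℝ)) :
    l2Form Ω μ (∂_{v} u) w = -l2Form Ω μ u (∂_{v} w) := by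
  rw [l2Form_lineDerivOp_right, neg_neg]

theorem l2Form_self_le_lineDerivOp {ℓ : E →L[ℝ] ℝ} {v : E} (hv : ℓ v = 1) {h : ℝ}
    (hh : ∀ p ∈ Ω, |ℓ p| ≤ h) (u : 𝓓(Ω, ℝ)) :
    l2Form Ω μ u u ≤ 4 * h ^ 2 * l2Form Ω μ (∂_{v} u) (∂_{v} u) := by
  set w : 𝓓(Ω, ℝ) := smoothMul ℓ.contDiff (∂_{v} u)
  have hcomm : l2Form Ω μ u u = -2 * l2Form Ω μ u w := by
    have hparts := l2Form_lineDerivOp_right μ v u (smoothMul ℓ.contDiff u)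
    rw [lineDerivOp_smoothMul_clm, hv, one_smul, map_add, l2Form_comm μ (∂_{v} u),
      l2Form_smoothMul_left] at hparts
    linarith
  have hle : l2Form Ω μ u u ≤ 2 * |l2Form Ω μ u w| := by
    rw [hcomm]
    linarith [neg_abs_le (l2Form Ω μ u w)]
  have hcs := apply_self_le_sq_mul_of_le_mul_abs (l2Form_isSymm μ) (l2Form_self_nonneg μ) hle
  have hwle := l2Form_smoothMul_self_le μ ℓ.contDiff hh (∂_{v} u)
  linarith

theorem l2Form_frameLaplacian_right (e : ι → E) (u : 𝓓(Ω, ℝ)) :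
    l2Form Ω μ u (frameLaplacian e u) = -∑ i, l2Form Ω μ (∂_{e i} u) (∂_{e i} u) := by
  simp only [frameLaplacian_apply, map_sum, l2Form_lineDerivOp_right μ _ u, Finset.sum_neg_distrib]

-- Cross terms `⟪∂ᵢ²u, ∂ⱼ²u⟫` become squares after integrating by parts once in each direction.
theorem l2Form_frameLaplacian_self (e : ι → E) (u : 𝓓(Ω, ℝ)) :
    l2Form Ω μ (frameLaplacian e u) (frameLaplacian e u) =
      ∑ i, ∑ j, l2Form Ω μ (∂_{e i} (∂_{e j} u)) (∂_{e i} (∂_{e j} u)) := by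
  have hcross (v w : E) : l2Form Ω μ (∂_{v} (∂_{v} u)) (∂_{w} (∂_{w} u)) =
      l2Form Ω μ (∂_{v} (∂_{w} u)) (∂_{v} (∂_{w} u)) := by
    calc l2Form Ω μ (∂_{v} (∂_{v} u)) (∂_{w} (∂_{w} u))
        = -l2Form Ω μ (∂_{v} u) (∂_{w} (∂_{v} (∂_{w} u))) := by
          rw [l2Form_lineDerivOp_left, lineDerivOp_testFunction_comm v w]
      _ = l2Form Ω μ (∂_{v} (∂_{w} u)) (∂_{v} (∂_{w} u)) := by
          rw [l2Form_lineDerivOp_right, neg_neg, lineDerivOp_testFunction_comm w v]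
  simp only [frameLaplacian_apply, map_sum, LinearMap.sum_apply, hcross]
  exact Finset.sum_comm

theorem l2Form_self_le_frameLaplacian {e : ι → E} {ℓ : E →L[ℝ] ℝ} {i : ι} (hi : ℓ (e i) = 1)
    {h : ℝ} (hh : ∀ p ∈ Ω, |ℓ p| ≤ h) (u : 𝓓(Ω, ℝ)) :
    l2Form Ω μ u u ≤
      16 * h ^ 4 * l2Form Ω μ (frameLaplacian e u) (frameLaplacian e u) := by
  have hsum : l2Form Ω μ (∂_{e i} u) (∂_{e i} u) ≤ |l2Form Ω μ u (frameLaplacian e u)| := by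
    rw [l2Form_frameLaplacian_right, abs_neg]
    exact (Finset.single_le_sum (f := fun j => l2Form Ω μ (∂_{e j} u) (∂_{e j} u))
      (fun j _ => l2Form_self_nonneg μ _) (Finset.mem_univ i)).trans (le_abs_self _)
  have hle : l2Form Ω μ u u ≤ 4 * h ^ 2 * |l2Form Ω μ u (frameLaplacian e u)| :=
    (l2Form_self_le_lineDerivOp μ hi hh u).trans (by gcongr)
  calc l2Form Ω μ u u
      ≤ (4 * h ^ 2) ^ 2 * l2Form Ω μ (frameLaplacian e u) (frameLaplacian e u) :=
        apply_self_le_sq_mul_of_le_mul_abs (l2Form_isSymm μ) (l2Form_self_nonneg μ) hle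
    _ = 16 * h ^ 4 * l2Form Ω μ (frameLaplacian e u) (frameLaplacian e u) := by ring

theorem l2Form_frameLaplacian_pullback_le {e : ι → E} {T : E ≃L[ℝ] E}
    (hTμ : MeasurePreserving T μ μ) (hT : T ⁻¹' Ω ⊆ Ω') {t : ι → ℝ}
    (hTe : ∀ i, T (e i) = t i • e i) {m : ℝ} (hm : ∀ i, |t i| ≤ m) (u : 𝓓(Ω, ℝ)) :
    l2Form Ω' μ (frameLaplacian e (pullback T hT u)) (frameLaplacian e (pullback T hT u)) ≤
      m ^ 4 * l2Form Ω μ (frameLaplacian e u) (frameLaplacian e u) := by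
  have hscale (i j : ι) : ∂_{e i} (∂_{e j} (pullback T hT u)) =
      (t i * t j) • pullback T hT (∂_{e i} (∂_{e j} u)) := by
    simp only [lineDerivOp_pullback, hTe, LineDeriv.lineDerivOp_left_smul,
      LineDeriv.lineDerivOp_smul, map_smul, smul_smul, mul_comm]
  rw [l2Form_frameLaplacian_self, l2Form_frameLaplacian_self]
  simp only [Finset.mul_sum]
  refine Finset.sum_le_sum fun i _ => Finset.sum_le_sum fun j _ => ?_
  have htij : (t i * t j) ^ 2 ≤ m ^ 4 := by
    calc (t i * t j) ^ 2 = (|t i| * |t j|) ^ 2 := by rw [← abs_mul, sq_abs]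
      _ ≤ (m * m) ^ 2 := by
        have hm₀ : 0 ≤ m := (abs_nonneg _).trans (hm i)
        gcongr <;> apply hm
      _ = m ^ 4 := by ring
  rw [hscale, map_smul, LinearMap.map_smul₂, smul_smul, ← sq, smul_eq_mul, l2Form_pullback μ hTμ hT]
  exact mul_le_mul_of_nonneg_right htij (l2Form_self_nonneg μ _)

variable {κ : Type*} [Fintype κ] [Nonempty κ] [Nontrivial E] {e : ι → E}

theorem inv_le_minMaxRayleigh_bendingForm (hΩ : (Ω : Set E).Nonempty) {ℓ : E →L[ℝ] ℝ} {i : ι}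
    (hi : ℓ (e i) = 1) {h : ℝ} (hpos : 0 < h) (hh : ∀ p ∈ Ω, |ℓ p| ≤ h) :
    (16 * h ^ 4)⁻¹ ≤ minMaxRayleigh κ (bendingForm Ω μ e) (massForm Ω μ) := by
  refine le_minMaxRayleigh (exists_linearIndependent_testFunction hΩ κ) (massForm_posDef μ)
    fun u => ?_
  rw [massForm_apply, bendingForm_apply, inv_mul_le_iff₀ (by positivity)]
  exact l2Form_self_le_frameLaplacian μ hi hh u

theorem minMaxRayleigh_bendingForm_le_pow_mul (hΩ : (Ω : Set E).Nonempty) {T : E ≃L[ℝ] E}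
    (hTμ : MeasurePreserving T μ μ) (hT : T ⁻¹' Ω ⊆ Ω') {t : ι → ℝ}
    (hTe : ∀ i, T (e i) = t i • e i) {m : ℝ} (hpos : 0 < m) (hm : ∀ i, |t i| ≤ m) :
    minMaxRayleigh κ (bendingForm Ω' μ e) (massForm Ω' μ) ≤
      m ^ 4 * minMaxRayleigh κ (bendingForm Ω μ e) (massForm Ω μ) :=
  minMaxRayleigh_le_mul (exists_linearIndependent_testFunction hΩ κ) (massForm_posDef μ)
    (bendingForm_nonneg μ e) (massForm_posDef μ).nonneg (pullback T hT)
    (fun u => l2Form_pullback μ hTμ hT u u) (pow_pos hpos 4)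
    (l2Form_frameLaplacian_pullback_le μ hTμ hT hTe hm)

end TestFunction

section RealFunction

theorem continuousOn_Ioi_of_le_max_div_pow_mul {f : ℝ → ℝ} {n : ℕ}
    (hf : ∀ a b, 0 < a → 0 < b → f b ≤ max (a / b) (b / a) ^ n * f a) :
    ContinuousOn f (Set.Ioi 0) := by
  intro a (ha : 0 < a)
  refine ContinuousAt.continuousWithinAt ?_
  have hcont : ContinuousAt (fun b => max (a / b) (b / a) ^ n) a :=
    ((continuousAt_const.div continuousAt_id ha.ne').max
      (continuousAt_id.div_const a)).pow n
  have hlim : Tendsto (fun b => max (a / b) (b / a) ^ n) (nhds a) (nhds 1) := by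
    simpa [div_self ha.ne'] using hcont.tendsto
  have hpos : ∀ᶠ b in nhds a, 0 < b := lt_mem_nhds ha
  refine tendsto_of_tendsto_of_tendsto_of_le_of_le'
    (g := fun b => (max (a / b) (b / a) ^ n)⁻¹ * f a)
    (h := fun b => max (a / b) (b / a) ^ n * f a) ?_ ?_ ?_ ?_
  · simpa using (hlim.inv₀ one_ne_zero).mul_const (f a)
  · simpa using hlim.mul_const (f a)
  · filter_upwards [hpos] with b hb
    have hmax : 0 < max (a / b) (b / a) := lt_max_of_lt_left (div_pos ha hb)
    rw [inv_mul_le_iff₀ (pow_pos hmax n), max_comm]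
    exact hf b a hb ha
  · filter_upwards [hpos] with b hb using hf a b ha hb

theorem exists_isMinOn_Ici_of_tendsto_atTop {f : ℝ → ℝ} {x₀ : ℝ}
    (hf : ContinuousOn f (Set.Ici x₀)) (hlim : Tendsto f atTop atTop) :
    ∃ x ∈ Set.Ici x₀, IsMinOn f (Set.Ici x₀) x := by
  refine hf.exists_isMinOn' isClosed_Ici Set.self_mem_Ici ?_
  rw [cocompact_eq_atBot_atTop, inf_sup_right, eventually_sup]
  constructor
  · filter_upwards [mem_inf_of_left (Iio_mem_atBot x₀), mem_inf_of_right (mem_principal_self _)]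
      with x (hlt : x < x₀) hge using absurd hge hlt.not_ge
  · exact (hlim.eventually_ge_atTop (f x₀)).filter_mono inf_le_left

end RealFunction

section Rectangle

open TopologicalSpace (Opens)
open scoped Distributions LineDeriv ContDiff

variable {Ω : Opens (ℝ × ℝ)}

/-- The standard basis of the plane, as a frame for `frameLaplacian`. -/
def planeFrame : Fin 2 → ℝ × ℝ := ![(1, 0), (0, 1)]

/-- The rectangle `R_a` as an open set, so that it can carry a space of test functions. -/
def rectOpens (a : ℝ) : Opens (ℝ × ℝ) := ⟨Rect a, isOpen_Ioo.prod isOpen_Ioo⟩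

theorem coe_lineDerivOp_eq_pd (v : ℝ × ℝ) (u : 𝓓(Ω, ℝ)) : ⇑(∂_{v} u : 𝓓(Ω, ℝ)) = pd v u :=
  funext (lineDerivOp_eq_fderiv v u)

theorem frameLaplacian_planeFrame (u : 𝓓(Ω, ℝ)) : ⇑(frameLaplacian planeFrame u) = lap u := by
  ext p
  simp [frameLaplacian_apply, planeFrame, coe_lineDerivOp_eq_pd, lap, uxx, uyy]

theorem massForm_eq_integral_sq (u : 𝓓(Ω, ℝ)) : massForm Ω volume u = ∫ p, u p ^ 2 := by
  simp only [massForm_apply, l2Form_apply, sq]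

theorem bendingForm_eq_integral_lap_sq (u : 𝓓(Ω, ℝ)) :
    bendingForm Ω volume planeFrame u = ∫ p, lap u p ^ 2 := by
  simp only [bendingForm_apply, l2Form_apply, frameLaplacian_planeFrame, sq]

theorem maxRayleigh_bendingForm_eq_sSup {κ : Type*} [Fintype κ] (u : κ → 𝓓(Ω, ℝ)) :
    maxRayleigh (bendingForm Ω volume planeFrame) (massForm Ω volume) u =
      sSup {r | ∃ c : κ → ℝ, c ≠ 0 ∧ r = (∫ p, lap (fun q => ∑ i, c i * u i q) p ^ 2) /
        ∫ p, (∑ i, c i * u i p) ^ 2} := by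
  have hcoe (c : κ → ℝ) : ⇑(∑ i, c i • u i) = fun q => ∑ i, c i * u i q := by
    ext q
    simp
  simp only [maxRayleigh, massForm_eq_integral_sq, bendingForm_eq_integral_lap_sq, hcoe]

theorem lamk_eq_minMaxRayleigh (k : ℕ) (a : ℝ) :
    lamk k a = minMaxRayleigh (Fin k) (bendingForm (rectOpens a) volume planeFrame)
      (massForm (rectOpens a) volume) := by
  unfold lamk minMaxRayleigh
  congr with μ
  constructor
  · rintro ⟨u, hadm, hu, rfl⟩
    let w (i : Fin k) : 𝓓(rectOpens a, ℝ) := ⟨u i, (hadm i).1, (hadm i).2.1, (hadm i).2.2⟩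
    exact ⟨w, linearIndependent_coe_testFunction_iff.1 hu, (maxRayleigh_bendingForm_eq_sSup w).symm⟩
  · rintro ⟨u, hu, rfl⟩
    exact ⟨fun i => u i, fun i => ⟨(u i).contDiff, (u i).hasCompactSupport, (u i).tsupport_subset⟩,
      linearIndependent_coe_testFunction_iff.2 hu, maxRayleigh_bendingForm_eq_sSup u⟩

/-- The area-preserving diagonal map `(x, y) ↦ (t x, t⁻¹ y)`. -/
def squeeze (t : ℝˣ) : (ℝ × ℝ) ≃L[ℝ] ℝ × ℝ :=
  (ContinuousLinearEquiv.smulLeft t).prodCongr (ContinuousLinearEquiv.smulLeft t).symm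

theorem squeeze_apply (t : ℝˣ) (p : ℝ × ℝ) : squeeze t p = ((t : ℝ) * p.1, (t : ℝ)⁻¹ * p.2) :=
  Prod.ext rfl (congrArg (· * p.2) (Units.val_inv_eq_inv_val t))

theorem measurePreserving_squeeze (t : ℝˣ) : MeasurePreserving (squeeze t) := by
  refine ⟨(squeeze t).continuous.measurable, ?_⟩
  have hdet : LinearMap.det ((squeeze t : (ℝ × ℝ) →L[ℝ] ℝ × ℝ) : (ℝ × ℝ) →ₗ[ℝ] ℝ × ℝ) = 1 := by
    have hprod : ((squeeze t : (ℝ × ℝ) →L[ℝ] ℝ × ℝ) : (ℝ × ℝ) →ₗ[ℝ] ℝ × ℝ) =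
        ((t : ℝ) • LinearMap.id).prodMap ((t : ℝ)⁻¹ • LinearMap.id) :=
      LinearMap.ext (squeeze_apply t)
    rw [hprod, LinearMap.det_prodMap]
    simp
  have hmap := Measure.map_linearMap_addHaar_eq_smul_addHaar (volume : Measure (ℝ × ℝ))
    (hdet.trans_ne one_ne_zero)
  rwa [hdet, inv_one, abs_one, ENNReal.ofReal_one, one_smul] at hmap

theorem rect_nonempty {a : ℝ} (ha : 0 < a) : (Rect a).Nonempty :=
  (Set.nonempty_Ioo.2 ha).prod (Set.nonempty_Ioo.2 (one_div_pos.2 ha))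

theorem squeeze_preimage_rect {t : ℝˣ} (ht : 0 < (t : ℝ)) (b : ℝ) :
    squeeze t ⁻¹' Rect (t * b) = Rect b := by
  have hheight : 1 / (t * b) = (t : ℝ)⁻¹ * (1 / b) := by rw [one_div, one_div, mul_inv]
  ext p
  simp [Rect, squeeze_apply, hheight, mul_lt_mul_iff_right₀, ht]

variable {k : ℕ} [NeZero k]

theorem lamk_le_max_div_pow_mul {a b : ℝ} (ha : 0 < a) (hb : 0 < b) :
    lamk k b ≤ max (a / b) (b / a) ^ 4 * lamk k a := by
  let t : ℝˣ := Units.mk0 (a / b) (div_pos ha hb).ne'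
  have hpre : squeeze t ⁻¹' Rect a = Rect b := by
    simpa only [t, Units.val_mk0, div_mul_cancel₀ a hb.ne'] using
      squeeze_preimage_rect (t := t) (div_pos ha hb) b
  rw [lamk_eq_minMaxRayleigh, lamk_eq_minMaxRayleigh]
  refine minMaxRayleigh_bendingForm_le_pow_mul volume (rect_nonempty ha)
    (measurePreserving_squeeze t) hpre.subset (t := ![a / b, b / a]) ?_
    (lt_max_of_lt_left (div_pos ha hb)) ?_
  · simp [Fin.forall_fin_two, planeFrame, squeeze_apply, t]
  · simp [Fin.forall_fin_two, abs_of_pos, ha, hb]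

theorem pow_four_div_le_lamk {a : ℝ} (ha : 0 < a) : a ^ 4 / 16 ≤ lamk k a := by
  have hsnd : ∀ p ∈ rectOpens a, |ContinuousLinearMap.snd ℝ ℝ ℝ p| ≤ 1 / a := fun p hp =>
    (abs_of_pos hp.2.1).trans_le hp.2.2.le
  calc a ^ 4 / 16 = (16 * (1 / a) ^ 4)⁻¹ := by field_simp
    _ ≤ lamk k a := by
      rw [lamk_eq_minMaxRayleigh]
      exact inv_le_minMaxRayleigh_bendingForm volume (rect_nonempty ha) (i := 1)
        (by simp [planeFrame]) (one_div_pos.2 ha) hsnd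

theorem tendsto_lamk_atTop : Tendsto (lamk k) atTop atTop :=
  tendsto_atTop_mono' atTop ((eventually_gt_atTop 0).mono fun _ => pow_four_div_le_lamk)
    ((tendsto_pow_atTop four_ne_zero).atTop_div_const (by norm_num))

theorem continuousOn_lamk : ContinuousOn (lamk k) (Set.Ioi 0) :=
  continuousOn_Ioi_of_le_max_div_pow_mul fun _ _ => lamk_le_max_div_pow_mul

end Rectangle

/-- The infimum of `λ_k` over rectangles of unit area is attained; in
particular `λ_k(a) → ∞` as `a → ∞`. -/
theorem biharmonic_minimiser_exists (k : ℕ) (hk : 1 ≤ k) :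
    (∃ astar : ℝ, 1 ≤ astar ∧
      lamk k astar = sInf { μ | ∃ a : ℝ, 1 ≤ a ∧ μ = lamk k a }) ∧
    Filter.Tendsto (fun a : ℝ => lamk k a) Filter.atTop Filter.atTop := by
  have : NeZero k := ⟨Nat.one_le_iff_ne_zero.1 hk⟩
  obtain ⟨a, ha, hmin⟩ := exists_isMinOn_Ici_of_tendsto_atTop
    (continuousOn_lamk.mono (Set.Ici_subset_Ioi.2 one_pos)) (tendsto_lamk_atTop (k := k))
  have hleast : IsLeast {μ | ∃ a : ℝ, 1 ≤ a ∧ μ = lamk k a} (lamk k a) :=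
    ⟨⟨a, ha, rfl⟩, by rintro _ ⟨b, hb, rfl⟩; exact hmin hb⟩
  exact ⟨⟨a, ha, hleast.csInf_eq.symm⟩, tendsto_lamk_atTop⟩
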